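/- Let k ≥ 0 be an integer and let μ = Σ_{i=1}^{k+1} a_i δ_{b_i} be a Borel probability measure on ℝ supported on the k+1 distinct points b_1, …, b_{k+1}, with weights a_i > 0 summing to 1. Let (μ_n)_{n≥1} be Borel probability measures on ℝ with finite moments of order up to 2k+2 such that ∫ x^i dμ_n → ∫ x^i dμ as n → ∞ for every i = 1, …, 2k+2. Then μ_n converges weakly to μ. -/

import Mathlib

open MeasureTheory Filter Topology BoundedContinuousFunction

/-- Weak convergence of a sequence of measures: convergence of integrals of all
bounded continuous functions. -/
def WeakConv (μs : ℕ → Measure ℝ) (μ : Measure ℝ) : Prop :=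
  ∀ f : ℝ →ᵇ ℝ, Tendsto (fun n => ∫ x, f x ∂(μs n)) atTop (𝓝 (∫ x, f x ∂μ))

/-!
Let `μ` be concentrated on the finite set `s`, let `L` be the Lagrange interpolant of the test
function `f` at `s`, and let `Q` be the monic polynomial with simple roots at `s`. Both `L` and
`Q ^ 2` have degree at most `2 * #s`, so their integrals converge; the limits are `∫ x, f x ∂μ` and
`0`. As `f - L` vanishes on `s` and grows no faster than `Q ^ 2`, for each `ε > 0` there is `C` such
that `|f - L| ≤ ε + C * Q ^ 2`. Hence the integrals of `f - L` tend to `0`.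
-/

open Asymptotics Polynomial

theorem isBigO_cocompact_eval_of_degree_le {p q : ℝ[X]} (h : p.degree ≤ q.degree) :
    (fun x => p.eval x) =O[cocompact ℝ] fun x => q.eval x :=
  Metric.cobounded_eq_cocompact (α := ℝ) ▸ isBigO_cobounded_of_degree_le h

theorem isBigO_cocompact_eval_pow_of_degree_le {p : ℝ[X]} {m : ℕ} (h : p.degree ≤ m) :
    (fun x => p.eval x) =O[cocompact ℝ] fun x => x ^ m := by
  simpa only [eval_pow, eval_X] using
    isBigO_cocompact_eval_of_degree_le (q := X ^ m) (by rwa [degree_X_pow])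

theorem isBigO_cocompact_pow_of_bounded (f : ℝ →ᵇ ℝ) (m : ℕ) :
    f =O[cocompact ℝ] fun x => x ^ m := by
  have f_isBigO_one : f =O[cocompact ℝ] fun _ => (1 : ℝ) :=
    isBigO_of_le' _ fun x => by simpa only [norm_one, mul_one] using f.norm_coe_le_norm x
  refine f_isBigO_one.trans ?_
  simpa only [eval_one] using isBigO_cocompact_eval_pow_of_degree_le (p := 1) (m := m) (by simp)

theorem exists_abs_le_add_mul_of_isBigO_cocompact {X : Type*} [TopologicalSpace X] {g q : X → ℝ}
    (hg : Continuous g) (hq : Continuous q) (q_nonneg : ∀ x, 0 ≤ q x)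
    (hzero : ∀ x, q x = 0 → g x = 0) (hO : g =O[cocompact X] q) {ε : ℝ} (hε : 0 < ε) :
    ∃ C, ∀ x, |g x| ≤ ε + C * q x := by
  obtain ⟨C₁, hC₁, hgq⟩ := hO.exists_nonneg
  obtain ⟨K, hK, hKC⟩ := mem_cocompact.1 hgq.bound
  have compact_large : IsCompact (K ∩ {x | ε ≤ |g x|}) :=
    hK.inter_right (isClosed_le continuous_const hg.abs)
  have q_ne_zero : ∀ x ∈ K ∩ {x | ε ≤ |g x|}, q x ≠ 0 := fun x hx hqx =>
    (hε.trans_le hx.2).ne' (by rw [hzero x hqx, abs_zero])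
  obtain ⟨C₂, hC₂⟩ :=
    compact_large.bddAbove_image (hg.abs.continuousOn.div hq.continuousOn q_ne_zero)
  refine ⟨max C₁ C₂, fun x => ?_⟩
  have max_mul_nonneg : 0 ≤ max C₁ C₂ * q x :=
    mul_nonneg (hC₁.trans (le_max_left _ _)) (q_nonneg x)
  by_cases hxK : x ∈ K
  · rcases lt_or_ge |g x| ε with hlt | hge
    · linarith
    · have q_pos : 0 < q x := (q_nonneg x).lt_of_ne' (q_ne_zero x ⟨hxK, hge⟩)
      have ratio_le : |g x| / q x ≤ max C₁ C₂ :=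
        (hC₂ (Set.mem_image_of_mem _ ⟨hxK, hge⟩)).trans (le_max_right _ _)
      linarith [(div_le_iff₀ q_pos).1 ratio_le]
  · have abs_le : |g x| ≤ C₁ * q x := by simpa [abs_of_nonneg (q_nonneg x)] using hKC hxK
    linarith [mul_le_mul_of_nonneg_right (le_max_left C₁ C₂) (q_nonneg x)]

theorem degree_interpolate_le_two_mul_card {κ F : Type*} [DecidableEq κ] [Field F] {s : Finset κ}
    {v : κ → F} (hv : Set.InjOn v s) (r : κ → F) :
    (Lagrange.interpolate s v r).degree ≤ (2 * s.card : ℕ) :=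
  (Lagrange.degree_interpolate_lt r hv).le.trans
    (by exact_mod_cast Nat.le_mul_of_pos_left _ two_pos)

theorem degree_nodal_sq {κ F : Type*} [Field F] (s : Finset κ) (v : κ → F) :
    (Lagrange.nodal s v ^ 2).degree = (2 * s.card : ℕ) := by
  simp [degree_pow, Lagrange.degree_nodal]

theorem exists_abs_sub_interpolate_le (s : Finset ℝ) {f : ℝ → ℝ} (hf : Continuous f)
    (hO : f =O[cocompact ℝ] fun x => x ^ (2 * s.card)) {ε : ℝ} (hε : 0 < ε) :
    ∃ C, ∀ x, |f x - (Lagrange.interpolate s id f).eval x| ≤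
      ε + C * (Lagrange.nodal s id ^ 2).eval x := by
  have pow_isBigO : (fun x : ℝ => x ^ (2 * s.card)) =O[cocompact ℝ]
      fun x => (Lagrange.nodal s id ^ 2).eval x := by
    simpa only [eval_pow, eval_X] using isBigO_cocompact_eval_of_degree_le
      ((degree_X_pow _).trans (degree_nodal_sq s id).symm).le
  refine exists_abs_le_add_mul_of_isBigO_cocompact (hf.sub (by fun_prop)) (by fun_prop)
    (fun x => by simpa using sq_nonneg _) (fun x hx => ?_) ((hO.trans pow_isBigO).sub
      (isBigO_cocompact_eval_of_degree_le ?_)) hε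
  · have hxs : x ∈ s := by
      simpa [Lagrange.eval_nodal, Finset.prod_eq_zero_iff, sub_eq_zero] using hx
    exact sub_eq_zero.2 (Lagrange.eval_interpolate_at_node f Function.injective_id.injOn hxs).symm
  · exact (degree_interpolate_le_two_mul_card Function.injective_id.injOn f).trans_eq
      (degree_nodal_sq s id).symm

section Integrals

variable {ι : Type*} {l : Filter ι}

theorem integrable_of_ae_mem_finset {X E : Type*} [MeasurableSpace X] [MeasurableSingletonClass X]
    [NormedAddCommGroup E] {μ : Measure X} [IsFiniteMeasure μ] {s : Finset X}
    (hs : ∀ᵐ x ∂μ, x ∈ s) (f : X → E) : Integrable f μ := by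
  rw [← Measure.restrict_eq_self_of_ae_mem (s := (s : Set X)) hs]
  exact IntegrableOn.finset

theorem integrable_of_isBigO_pow {μ : Measure ℝ} [IsLocallyFiniteMeasure μ] {f : ℝ → ℝ}
    (hf : Continuous f) {m : ℕ} (hO : f =O[cocompact ℝ] fun x => x ^ m)
    (hm : Integrable (fun x => x ^ m) μ) : Integrable f μ :=
  hf.locallyIntegrable.integrable_of_isBigO_cocompact hO (hm.integrableAtFilter _)

theorem integrable_eval_of_degree_le {μ : Measure ℝ} [IsLocallyFiniteMeasure μ] {p : ℝ[X]} {m : ℕ}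
    (hp : p.degree ≤ m) (hm : Integrable (fun x => x ^ m) μ) :
    Integrable (fun x => p.eval x) μ :=
  integrable_of_isBigO_pow p.continuous (isBigO_cocompact_eval_pow_of_degree_le hp) hm

theorem integrable_pow_of_le {μ : Measure ℝ} [IsLocallyFiniteMeasure μ] {i m : ℕ} (hi : i ≤ m)
    (hm : Integrable (fun x => x ^ m) μ) : Integrable (fun x => x ^ i) μ := by
  simpa only [eval_pow, eval_X] using integrable_eval_of_degree_le (p := X ^ i)
    ((degree_X_pow_le i).trans (by exact_mod_cast hi)) hm

theorem integral_eval_eq_sum_moments {μ : Measure ℝ} {p : ℝ[X]}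
    (hint : ∀ i ≤ p.natDegree, Integrable (fun x => x ^ i) μ) :
    ∫ x, p.eval x ∂μ = ∑ i ∈ Finset.range (p.natDegree + 1), p.coeff i * ∫ x, x ^ i ∂μ := by
  simp_rw [eval_eq_sum_range, ← integral_const_mul]
  exact integral_finsetSum _ fun i hi => (hint i (Finset.mem_range_succ_iff.1 hi)).const_mul _

theorem tendsto_integral_eval_of_tendsto_moments {μs : ι → Measure ℝ} {μ : Measure ℝ}
    [∀ n, IsLocallyFiniteMeasure (μs n)] [IsLocallyFiniteMeasure μ] {p : ℝ[X]} {m : ℕ}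
    (hp : p.degree ≤ m) (hints : ∀ n, Integrable (fun x => x ^ m) (μs n))
    (hint : Integrable (fun x => x ^ m) μ)
    (hmom : ∀ i ≤ m, Tendsto (fun n => ∫ x, x ^ i ∂(μs n)) l (𝓝 (∫ x, x ^ i ∂μ))) :
    Tendsto (fun n => ∫ x, p.eval x ∂(μs n)) l (𝓝 (∫ x, p.eval x ∂μ)) := by
  have hdeg : p.natDegree ≤ m := natDegree_le_of_degree_le hp
  simp_rw [integral_eval_eq_sum_moments fun _ hi => integrable_pow_of_le (hi.trans hdeg) hint,
    fun n => integral_eval_eq_sum_moments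
      fun _ hi => integrable_pow_of_le (hi.trans hdeg) (hints n)]
  exact tendsto_finsetSum _ fun i hi =>
    (hmom i ((Finset.mem_range_succ_iff.1 hi).trans hdeg)).const_mul _

theorem tendsto_integral_zero_of_abs_le_add_mul {Ω : Type*} [MeasurableSpace Ω]
    {μs : ι → Measure Ω} [∀ n, IsFiniteMeasure (μs n)] {M : ℝ}
    (hmass : Tendsto (fun n => (μs n).real Set.univ) l (𝓝 M)) {g q : Ω → ℝ}
    (hq : ∀ n, Integrable q (μs n)) (hq_zero : Tendsto (fun n => ∫ x, q x ∂(μs n)) l (𝓝 0))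
    (hbound : ∀ ε > 0, ∃ C, ∀ x, |g x| ≤ ε + C * q x) :
    Tendsto (fun n => ∫ x, g x ∂(μs n)) l (𝓝 0) := by
  refine Metric.tendsto_nhds.2 fun ε hε => ?_
  obtain ⟨δ, hδ, hMδ⟩ := exists_pos_mul_lt hε M
  obtain ⟨C, hC⟩ := hbound δ hδ
  have majorant_tendsto : Tendsto (fun n => (μs n).real Set.univ * δ + C * ∫ x, q x ∂(μs n)) l
      (𝓝 (M * δ)) := by
    simpa using (hmass.mul_const δ).add (hq_zero.const_mul C)
  filter_upwards [majorant_tendsto.eventually_lt_const hMδ] with n hn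
  rw [dist_zero_right]
  calc ‖∫ x, g x ∂(μs n)‖
      ≤ ∫ x, δ + C * q x ∂(μs n) :=
        norm_integral_le_of_norm_le ((integrable_const δ).add ((hq n).const_mul C))
          (Eventually.of_forall hC)
    _ = (μs n).real Set.univ * δ + C * ∫ x, q x ∂(μs n) := by
        rw [integral_add (integrable_const δ) ((hq n).const_mul C), integral_const,
          integral_const_mul, smul_eq_mul]
    _ < ε := hn

end Integrals

section Discrete

variable {κ X : Type*} [Fintype κ] [MeasurableSpace X]

theorem ae_mem_image_sum_smul_dirac [MeasurableSingletonClass X] [DecidableEq X]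
    (c : κ → ENNReal) (b : κ → X) :
    ∀ᵐ x ∂(∑ i, c i • Measure.dirac (b i)), x ∈ Finset.univ.image b := by
  rw [ae_iff, Measure.finsetSum_apply]
  simp

theorem isProbabilityMeasure_sum_ofReal_smul_dirac {a : κ → ℝ} (ha : ∀ i, 0 ≤ a i)
    (hsum : ∑ i, a i = 1) (b : κ → X) :
    IsProbabilityMeasure (∑ i, ENNReal.ofReal (a i) • Measure.dirac (b i)) :=
  ⟨by simp [← ENNReal.ofReal_sum_of_nonneg fun i _ => ha i, hsum]⟩

end Discrete

theorem moment_convergence_to_finitely_supported_general {ι : Type*} {l : Filter ι}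
    {μ : Measure ℝ} [IsFiniteMeasure μ] {s : Finset ℝ} (hs : ∀ᵐ x ∂μ, x ∈ s)
    {μs : ι → Measure ℝ} [∀ n, IsFiniteMeasure (μs n)]
    (hfin : ∀ n, Integrable (fun x => x ^ (2 * s.card)) (μs n))
    (hmom : ∀ i ≤ 2 * s.card, Tendsto (fun n => ∫ x, x ^ i ∂(μs n)) l (𝓝 (∫ x, x ^ i ∂μ)))
    {f : ℝ → ℝ} (hf : Continuous f) (hO : f =O[cocompact ℝ] fun x => x ^ (2 * s.card)) :
    Tendsto (fun n => ∫ x, f x ∂(μs n)) l (𝓝 (∫ x, f x ∂μ)) := by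
  have tendsto_poly {p : ℝ[X]} (hp : p.degree ≤ (2 * s.card : ℕ)) :
      Tendsto (fun n => ∫ x, p.eval x ∂(μs n)) l (𝓝 (∫ x, p.eval x ∂μ)) :=
    tendsto_integral_eval_of_tendsto_moments hp hfin (integrable_of_ae_mem_finset hs _) hmom
  set L := Lagrange.interpolate s id f
  set Q := Lagrange.nodal s (id : ℝ → ℝ)
  have hL : L.degree ≤ (2 * s.card : ℕ) :=
    degree_interpolate_le_two_mul_card Function.injective_id.injOn f
  have hQ : (Q ^ 2).degree ≤ (2 * s.card : ℕ) := (degree_nodal_sq s id).le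
  have integral_L : ∫ x, L.eval x ∂μ = ∫ x, f x ∂μ := integral_congr_ae <| hs.mono fun x hx =>
    Lagrange.eval_interpolate_at_node f Function.injective_id.injOn hx
  have integral_Q : ∫ x, (Q ^ 2).eval x ∂μ = 0 := integral_eq_zero_of_ae <| hs.mono fun x hx => by
    simpa [Q] using Lagrange.eval_nodal_at_node (v := id) hx
  have hmass : Tendsto (fun n => (μs n).real Set.univ) l (𝓝 (μ.real Set.univ)) := by
    simpa using hmom 0 (Nat.zero_le _)
  have tendsto_remainder : Tendsto (fun n => ∫ x, f x - L.eval x ∂(μs n)) l (𝓝 0) :=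
    tendsto_integral_zero_of_abs_le_add_mul hmass
      (fun n => integrable_eval_of_degree_le hQ (hfin n)) (integral_Q ▸ tendsto_poly hQ)
      fun ε hε => exists_abs_sub_interpolate_le s hf hO hε
  simpa [integral_L, integral_sub (integrable_of_isBigO_pow hf hO (hfin _))
    (integrable_eval_of_degree_le hL (hfin _))] using tendsto_remainder.add (tendsto_poly hL)

theorem moment_convergence_to_finitely_supported
    (k : ℕ)
    (b : Fin (k + 1) → ℝ) (hb : Function.Injective b)
    (a : Fin (k + 1) → ℝ) (ha : ∀ i, 0 < a i) (hsum : ∑ i, a i = 1)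
    (μ : Measure ℝ)
    (hμ : μ = ∑ i, ENNReal.ofReal (a i) • Measure.dirac (b i))
    (μs : ℕ → Measure ℝ)
    (hprobs : ∀ n, IsProbabilityMeasure (μs n))
    (hfin : ∀ n, ∀ i : ℕ, i ≤ 2 * k + 2 → Integrable (fun x => x ^ i) (μs n))
    (hmom : ∀ i : ℕ, 1 ≤ i → i ≤ 2 * k + 2 →
      Tendsto (fun n => ∫ x, x ^ i ∂(μs n)) atTop (𝓝 (∫ x, x ^ i ∂μ))) :
    WeakConv μs μ := by
  intro f
  have hs : ∀ᵐ x ∂μ, x ∈ Finset.univ.image b := hμ ▸ ae_mem_image_sum_smul_dirac _ b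
  have : IsProbabilityMeasure μ :=
    hμ ▸ isProbabilityMeasure_sum_ofReal_smul_dirac (fun i => (ha i).le) hsum b
  have hcard : 2 * (Finset.univ.image b).card = 2 * k + 2 := by
    rw [Finset.card_image_of_injective _ hb, Finset.card_fin, mul_add_one]
  refine moment_convergence_to_finitely_supported_general hs (fun n => hfin n _ hcard.le)
    (fun i hi => ?_) f.continuous (isBigO_cocompact_pow_of_bounded f _)
  rcases i.eq_zero_or_pos with rfl | hpos
  · simp
  · exact hmom i hpos (hi.trans_eq hcard)
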